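/- Fix θ ∈ ℝ and for a C² function u of (x, y, t) ∈ ℝ³ write u_X = cosθ·∂_x u − sinθ·∂_y u, u_Y = sinθ·∂_x u + cosθ·∂_y u, with u_XX, u_XY, u_Xt, u_YY, u_tt the corresponding second derivatives. For every smooth ℤ³-periodic function F : ℝ³ → ℝ there exists δ > 0, depending only on θ and F, such that every smooth ℤ³-periodic function u : ℝ³ → ℝ with sup u = 0 satisfying (u_XX + 1)(u_YY + u_tt + u_t + 1) − u_XY² − u_Xt² = e^F with u_XX + 1 > 0 and u_YY + u_tt + u_t + 1 > 0 at every point obeys |{ x ∈ [0,1)³ : u(x) ≤ inf u + 1 }| ≥ δ, where | · | denotes Lebesgue measure. -/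

import Mathlib

open MeasureTheory

/-- The partial derivative of `w : ℝ³ → ℝ` in the `i`-th coordinate direction
(coordinates `(x, y, t)` correspond to indices `0, 1, 2`). -/
noncomputable def pd (i : Fin 3) (w : EuclideanSpace ℝ (Fin 3) → ℝ) :
    EuclideanSpace ℝ (Fin 3) → ℝ :=
  fun x => fderiv ℝ w x (EuclideanSpace.single i (1 : ℝ))

/-- The derivative `w_X = cos θ ∂_x w − sin θ ∂_y w`. -/
noncomputable def Xd (θ : ℝ) (w : EuclideanSpace ℝ (Fin 3) → ℝ) :
    EuclideanSpace ℝ (Fin 3) → ℝ :=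
  fun x => Real.cos θ * pd 0 w x - Real.sin θ * pd 1 w x

/-- The derivative `w_Y = sin θ ∂_x w + cos θ ∂_y w`. -/
noncomputable def Yd (θ : ℝ) (w : EuclideanSpace ℝ (Fin 3) → ℝ) :
    EuclideanSpace ℝ (Fin 3) → ℝ :=
  fun x => Real.sin θ * pd 0 w x + Real.cos θ * pd 1 w x

/-- A second derivative, applied to two vectors, is the iterated directional derivative. -/
lemma fderiv_fderiv_apply_const {E : Type*} [NormedAddCommGroup E] [NormedSpace ℝ E]
    {w : E → ℝ} (hw : ContDiff ℝ 2 w) (x a b : E) :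
    fderiv ℝ (fun y => fderiv ℝ w y a) x b = fderiv ℝ (fderiv ℝ w) x b a := by
  have hd : DifferentiableAt ℝ (fderiv ℝ w) x :=
    ((hw.fderiv_right (m := 1) (by norm_num)).differentiable (by norm_num)) x
  rw [fderiv_clm_apply hd (differentiableAt_const a)]
  simp

/-- The second derivative of a `C²` function is nonnegative at a local minimum. -/
lemma IsLocalMin.fderiv_fderiv_nonneg {E : Type*} [NormedAddCommGroup E] [NormedSpace ℝ E]
    {w : E → ℝ} (hw : ContDiff ℝ 2 w) {x : E} (hx : IsLocalMin w x) (a : E) :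
    0 ≤ fderiv ℝ (fderiv ℝ w) x a a := by
  set φ : ℝ → ℝ := fun s => w (x + s • a) with hφ
  have hline : ∀ s : ℝ, HasDerivAt (fun s : ℝ => x + s • a) a s := fun s => by
    simpa using ((hasDerivAt_id s).smul_const a).const_add x
  have hd1 : deriv φ = fun s => fderiv ℝ w (x + s • a) a := by
    funext s
    exact (((hw.differentiable (by norm_num)) (x + s • a)).hasFDerivAt.comp_hasDerivAt s
      (hline s)).deriv
  have hdiff : Differentiable ℝ (fun y => fderiv ℝ w y a) :=
    ((hw.fderiv_right (m := 1) (by norm_num)).clm_apply contDiff_const).differentiable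
      (by norm_num)
  have hd2 : deriv (deriv φ) 0 = fderiv ℝ (fderiv ℝ w) x a a := by
    rw [hd1, ← fderiv_fderiv_apply_const hw]
    have := ((hdiff (x + (0 : ℝ) • a)).hasFDerivAt.comp_hasDerivAt (0 : ℝ) (hline 0)).deriv
    simpa [Function.comp_def] using this
  have hcont : ContinuousAt (fun s : ℝ => x + s • a) 0 := (hline 0).continuousAt
  have hmin : IsLocalMin φ 0 := by
    have : Filter.Tendsto (fun s : ℝ => x + s • a) (nhds 0) (nhds x) := by
      simpa [ContinuousAt] using hcont
    have h := this.eventually hx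
    simpa [IsLocalMin, IsMinFilter, hφ] using h
  by_contra! hneg
  rw [← hd2] at hneg
  have hmax : IsLocalMax φ 0 :=
    isLocalMax_of_deriv_deriv_neg hneg hmin.deriv_eq_zero
      (hw.continuous.continuousAt.comp hcont)
  have hconst : φ =ᶠ[nhds 0] fun _ => φ 0 := by
    filter_upwards [hmin, hmax] with s h1 h2
    exact le_antisymm h2 h1
  have : deriv (deriv φ) 0 = 0 := by
    rw [hconst.deriv.deriv_eq]
    simp
  linarith

/-- The coordinate gradient map of a function on `ℝ³`. -/
noncomputable def gradMap (v : EuclideanSpace ℝ (Fin 3) → ℝ) (x : EuclideanSpace ℝ (Fin 3)) :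
    EuclideanSpace ℝ (Fin 3) :=
  WithLp.toLp 2 fun i => pd i v x

lemma contDiff_gradMap {v : EuclideanSpace ℝ (Fin 3) → ℝ} (hv : ContDiff ℝ 2 v) :
    ContDiff ℝ 1 (gradMap v) := by
  rw [contDiff_euclidean]
  intro i
  exact (hv.fderiv_right (m := 1) (by norm_num)).clm_apply contDiff_const

lemma abs_det_fderiv_gradMap_le {v : EuclideanSpace ℝ (Fin 3) → ℝ} (hv : ContDiff ℝ 2 v)
    {x : EuclideanSpace ℝ (Fin 3)} {T : ℝ}
    (hT : ∀ i j, |fderiv ℝ (fderiv ℝ v) x (EuclideanSpace.single j 1)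
      (EuclideanSpace.single i 1)| ≤ T) :
    |(fderiv ℝ (gradMap v) x).det| ≤ 6 * T ^ 3 := by
  set b := (EuclideanSpace.basisFun (Fin 3) ℝ).toBasis with hb
  have hd : DifferentiableAt ℝ (gradMap v) x :=
    (contDiff_gradMap hv).differentiable (by norm_num) x
  have hentry : ∀ i j, LinearMap.toMatrix b b (fderiv ℝ (gradMap v) x : _ →ₗ[ℝ] _) i j =
      fderiv ℝ (fderiv ℝ v) x (EuclideanSpace.single j 1) (EuclideanSpace.single i 1) := by
    intro i j
    have h1 : fderiv ℝ (fun y => gradMap v y i) x = _ :=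
      ((EuclideanSpace.proj (𝕜 := ℝ) i).hasFDerivAt.comp x hd.hasFDerivAt).fderiv
    rw [← fderiv_fderiv_apply_const hv]
    have h2 : (fun y => fderiv ℝ v y (EuclideanSpace.single i 1)) = fun y => gradMap v y i := rfl
    rw [h2, h1, LinearMap.toMatrix_apply]
    simp [hb]
  have := Matrix.det_le (A := LinearMap.toMatrix b b (fderiv ℝ (gradMap v) x : _ →ₗ[ℝ] _))
    (abv := AbsoluteValue.abs) (x := T) (fun i j => by
      rw [hentry]; exact hT i j)
  rw [LinearMap.det_toMatrix] at this
  simpa [Nat.factorial] using this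

/-- Area estimate: if the gradient of `v` maps `P` onto a set containing `U` and the second
derivatives of `v` are bounded on `P`, then the measure of `U` is controlled by that of `P`. -/
lemma volume_le_of_subset_gradMap_image {v : EuclideanSpace ℝ (Fin 3) → ℝ}
    (hv : ContDiff ℝ 2 v) {P U : Set (EuclideanSpace ℝ (Fin 3))} (hP : MeasurableSet P)
    (hU : U ⊆ gradMap v '' P) {T : ℝ}
    (hT : ∀ x ∈ P, ∀ i j, |fderiv ℝ (fderiv ℝ v) x (EuclideanSpace.single j 1)
      (EuclideanSpace.single i 1)| ≤ T) :
    volume U ≤ ENNReal.ofReal (6 * T ^ 3) * volume P := by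
  calc volume U ≤ volume (gradMap v '' P) := measure_mono hU
    _ ≤ ∫⁻ x in P, ENNReal.ofReal |(fderiv ℝ (gradMap v) x).det| :=
        addHaar_image_le_lintegral_abs_det_fderiv volume hP fun x _ =>
          ((contDiff_gradMap hv).differentiable (by norm_num) x).hasFDerivAt.hasFDerivWithinAt
    _ ≤ ∫⁻ _ in P, ENNReal.ofReal (6 * T ^ 3) :=
        setLIntegral_mono' hP fun x hx =>
          ENNReal.ofReal_le_ofReal (abs_det_fderiv_gradMap_le hv (hT x hx))
    _ = ENNReal.ofReal (6 * T ^ 3) * volume P := by simp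

section Perturbation

variable {E : Type*} [NormedAddCommGroup E] [InnerProductSpace ℝ E]

lemma hasFDerivAt_add_mul_norm_sub_sq {u : E → ℝ} (hu : Differentiable ℝ u) (c : ℝ) (x₀ x : E) :
    HasFDerivAt (fun y => u y + c * ‖y - x₀‖ ^ 2)
      (fderiv ℝ u x + (2 * c) • innerSL ℝ (x - x₀)) x := by
  have h1 : HasFDerivAt (fun y => ‖y - x₀‖ ^ 2) (2 • innerSL ℝ (x - x₀)) x := by
    simpa using ((hasFDerivAt_id x).sub_const x₀).norm_sq
  refine ((hu x).hasFDerivAt.add (h1.const_mul c)).congr_fderiv ?_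
  ext y
  simp
  ring

lemma contDiff_add_mul_norm_sub_sq {u : E → ℝ} (hu : ContDiff ℝ 2 u) (c : ℝ) (x₀ : E) :
    ContDiff ℝ 2 (fun y => u y + c * ‖y - x₀‖ ^ 2) :=
  hu.add (contDiff_const.mul ((contDiff_id.sub contDiff_const).norm_sq ℝ))

lemma fderiv_fderiv_add_mul_norm_sub_sq {u : E → ℝ} (hu : ContDiff ℝ 2 u) (c : ℝ)
    (x₀ x a b : E) :
    fderiv ℝ (fderiv ℝ fun y => u y + c * ‖y - x₀‖ ^ 2) x a b =
      fderiv ℝ (fderiv ℝ u) x a b + 2 * c * inner ℝ a b := by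
  have h : (fderiv ℝ fun y => u y + c * ‖y - x₀‖ ^ 2) =
      fun x => fderiv ℝ u x + (2 * c) • innerSL ℝ (x - x₀) :=
    funext fun x =>
      (hasFDerivAt_add_mul_norm_sub_sq (hu.differentiable (by norm_num)) c x₀ x).fderiv
  have hd : HasFDerivAt (fderiv ℝ u) (fderiv ℝ (fderiv ℝ u) x) x :=
    ((hu.fderiv_right (m := 1) (by norm_num)).differentiable (by norm_num) x).hasFDerivAt
  let I : E →L[ℝ] E →L[ℝ] ℝ := innerSL ℝ
  have h2 : HasFDerivAt (fun y => innerSL ℝ (y - x₀)) I x := by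
    simp only [map_sub]
    exact I.hasFDerivAt.sub_const _
  have h3 : HasFDerivAt (fun x => fderiv ℝ u x + (2 * c) • innerSL ℝ (x - x₀))
      (fderiv ℝ (fderiv ℝ u) x + (2 * c) • I) x := hd.add (h2.const_smul (2 * c))
  rw [h, h3.fderiv]
  change _ + (2 * c) * inner ℝ a b = _
  simp

/-- Contact points: every small slope is the slope of `u + c‖· - x₀‖²` at some point near the
global minimum `x₀` of `u`, where `u` is close to its minimum and the second derivative of the
perturbation is nonnegative. -/
lemma exists_contact_point [FiniteDimensional ℝ E] {u : E → ℝ} (hu : ContDiff ℝ 2 u) {x₀ : E}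
    (hmin : ∀ y, u x₀ ≤ u y) {c : ℝ} (hc : 0 < c) {p : E} (hp : ‖p‖ ≤ c / 4) :
    ∃ x, ‖x - x₀‖ ≤ 1 / 4 ∧ u x ≤ u x₀ + c / 16 ∧
      fderiv ℝ (fun y => u y + c * ‖y - x₀‖ ^ 2) x = innerSL ℝ p ∧
      ∀ a, 0 ≤ fderiv ℝ (fderiv ℝ fun y => u y + c * ‖y - x₀‖ ^ 2) x a a := by
  set v : E → ℝ := fun y => u y + c * ‖y - x₀‖ ^ 2 with hvdef
  have hv : ContDiff ℝ 2 v := contDiff_add_mul_norm_sub_sq hu c x₀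
  set g : E → ℝ := fun y => v y - innerSL ℝ p y with hgdef
  have hg : ContDiff ℝ 2 g := hv.sub (innerSL ℝ p).contDiff
  obtain ⟨x, hxK, hx⟩ := (isCompact_closedBall x₀ (1 / 2)).exists_isMinOn
    ⟨x₀, Metric.mem_closedBall_self (by norm_num)⟩ hg.continuous.continuousOn
  have hx0 : g x ≤ g x₀ := hx (Metric.mem_closedBall_self (by norm_num))
  have hle : u x + c * ‖x - x₀‖ ^ 2 ≤ u x₀ + inner ℝ p (x - x₀) := by
    simp only [hgdef, hvdef, innerSL_apply_apply, sub_self, norm_zero] at hx0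
    rw [inner_sub_right]
    linarith
  have hcs : inner ℝ p (x - x₀) ≤ c / 4 * ‖x - x₀‖ :=
    (real_inner_le_norm p (x - x₀)).trans (mul_le_mul_of_nonneg_right hp (norm_nonneg _))
  have hr : ‖x - x₀‖ ≤ 1 / 4 := by
    by_contra! h
    have := hmin x
    nlinarith [mul_pos hc (show 0 < ‖x - x₀‖ by linarith)]
  have hloc : IsLocalMin g x := by
    refine hx.isLocalMin (Metric.closedBall_mem_nhds_of_mem ?_)
    rw [Metric.mem_ball, dist_eq_norm]
    linarith
  have hdg : ∀ y, fderiv ℝ g y = fderiv ℝ v y - innerSL ℝ p := fun y =>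
    (((hv.differentiable (by norm_num)) y).hasFDerivAt.sub (innerSL ℝ p).hasFDerivAt).fderiv
  refine ⟨x, hr, ?_, ?_, fun a => ?_⟩
  · nlinarith [mul_nonneg hc.le (sq_nonneg ‖x - x₀‖)]
  · have := hloc.fderiv_eq_zero
    rw [hdg] at this
    exact sub_eq_zero.1 this
  · have := hloc.fderiv_fderiv_nonneg hg a
    rwa [show fderiv ℝ g = fun y => fderiv ℝ v y - innerSL ℝ p from funext hdg,
      fderiv_sub_const] at this

end Perturbation

lemma sq_le_mul_of_forall_quadratic_nonneg {p q r : ℝ}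
    (h : ∀ s : ℝ, 0 ≤ p * (s * s) + 2 * q * s + r) : q ^ 2 ≤ p * r := by
  have := discrim_le_zero h
  rw [discrim] at this
  linarith

/-- Cauchy–Schwarz for a nonnegative symmetric continuous bilinear form. -/
lemma sq_apply_le_mul_of_nonneg {E : Type*} [NormedAddCommGroup E] [NormedSpace ℝ E]
    {B : E →L[ℝ] E →L[ℝ] ℝ} (hsymm : ∀ a b, B a b = B b a) (hB : ∀ a, 0 ≤ B a a) (a b : E) :
    (B a b) ^ 2 ≤ B a a * B b b := by
  refine sq_le_mul_of_forall_quadratic_nonneg fun s => ?_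
  have := hB (s • a + b)
  simp only [map_add, map_smul, add_apply, smul_apply,
    smul_eq_mul, hsymm b a] at this
  linarith

/-- The unit vector in the direction of `Xd θ`. -/
noncomputable def dirX (θ : ℝ) : EuclideanSpace ℝ (Fin 3) :=
  Real.cos θ • EuclideanSpace.single 0 1 - Real.sin θ • EuclideanSpace.single 1 1

/-- The unit vector in the direction of `Yd θ`. -/
noncomputable def dirY (θ : ℝ) : EuclideanSpace ℝ (Fin 3) :=
  Real.sin θ • EuclideanSpace.single 0 1 + Real.cos θ • EuclideanSpace.single 1 1

lemma Xd_eq_fderiv (θ : ℝ) (w : EuclideanSpace ℝ (Fin 3) → ℝ) :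
    Xd θ w = fun x => fderiv ℝ w x (dirX θ) := by
  funext x
  simp [Xd, pd, dirX]

lemma Yd_eq_fderiv (θ : ℝ) (w : EuclideanSpace ℝ (Fin 3) → ℝ) :
    Yd θ w = fun x => fderiv ℝ w x (dirY θ) := by
  funext x
  simp [Yd, pd, dirY]

lemma inner_dirX_self (θ : ℝ) : inner ℝ (dirX θ) (dirX θ) = 1 := by
  simp only [dirX, PiLp.inner_apply, Fin.sum_univ_three]
  simp

lemma inner_dirY_self (θ : ℝ) : inner ℝ (dirY θ) (dirY θ) = 1 := by
  simp only [dirY, PiLp.inner_apply, Fin.sum_univ_three]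
  simp

lemma inner_dirY_dirX (θ : ℝ) : inner ℝ (dirY θ) (dirX θ) = 0 := by
  simp only [dirX, dirY, PiLp.inner_apply, Fin.sum_univ_three]
  simp
  ring

lemma inner_single_two_dirX (θ : ℝ) :
    inner ℝ (EuclideanSpace.single 2 1) (dirX θ) = 0 := by
  simp only [dirX, PiLp.inner_apply, Fin.sum_univ_three]
  simp

lemma trace_rotated_frame (θ : ℝ)
    (B : EuclideanSpace ℝ (Fin 3) →L[ℝ] EuclideanSpace ℝ (Fin 3) →L[ℝ] ℝ) :
    B (dirX θ) (dirX θ) + B (dirY θ) (dirY θ) =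
      B (EuclideanSpace.single 0 1) (EuclideanSpace.single 0 1) +
      B (EuclideanSpace.single 1 1) (EuclideanSpace.single 1 1) := by
  simp only [dirX, dirY, map_add, map_sub, map_smul, add_apply,
    sub_apply, smul_apply, smul_eq_mul]
  linear_combination (B (EuclideanSpace.single 0 1) (EuclideanSpace.single 0 1) +
      B (EuclideanSpace.single 1 1) (EuclideanSpace.single 1 1)) * Real.sin_sq_add_cos_sq θ

lemma abs_apply_single_le_trace
    {B : EuclideanSpace ℝ (Fin 3) →L[ℝ] EuclideanSpace ℝ (Fin 3) →L[ℝ] ℝ}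
    (hsymm : ∀ a b, B a b = B b a) (hB : ∀ a, 0 ≤ B a a) (i j : Fin 3) :
    |B (EuclideanSpace.single i 1) (EuclideanSpace.single j 1)| ≤
      ∑ k, B (EuclideanSpace.single k 1) (EuclideanSpace.single k 1) := by
  have hk : ∀ k : Fin 3, B (EuclideanSpace.single k 1) (EuclideanSpace.single k 1) ≤
      ∑ k, B (EuclideanSpace.single k 1) (EuclideanSpace.single k 1) := fun k =>
    Finset.single_le_sum (f := fun k : Fin 3 =>
      B (EuclideanSpace.single k 1) (EuclideanSpace.single k 1)) (fun k _ => hB _)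
      (Finset.mem_univ k)
  refine abs_le_of_sq_le_sq ((sq_apply_le_mul_of_nonneg hsymm hB _ _).trans ?_)
    ((hB (EuclideanSpace.single i 1)).trans (hk i))
  rw [sq]
  exact mul_le_mul (hk i) (hk j) (hB _) ((hB _).trans (hk i))

/-- Pointwise bound on the trace of the perturbed Hessian at a contact point. -/
lemma trace_fderiv_fderiv_le {θ f : ℝ} {u : EuclideanSpace ℝ (Fin 3) → ℝ} (hu : ContDiff ℝ 2 u)
    {x x₀ : EuclideanSpace ℝ (Fin 3)}
    (heq : (Xd θ (Xd θ u) x + 1) * (Yd θ (Yd θ u) x + pd 2 (pd 2 u) x + pd 2 u x + 1) -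
      (Yd θ (Xd θ u) x) ^ 2 - (pd 2 (Xd θ u) x) ^ 2 = f)
    (hgrad : -(1 / 8) ≤ pd 2 u x)
    (hpos : ∀ a, 0 ≤ fderiv ℝ (fderiv ℝ fun y => u y + 1 / 16 * ‖y - x₀‖ ^ 2) x a a) :
    ∑ k, fderiv ℝ (fderiv ℝ fun y => u y + 1 / 16 * ‖y - x₀‖ ^ 2) x
      (EuclideanSpace.single k 1) (EuclideanSpace.single k 1) ≤ 2 * f := by
  have hsymm : ∀ a b, fderiv ℝ (fderiv ℝ fun y => u y + 1 / 16 * ‖y - x₀‖ ^ 2) x a b =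
      fderiv ℝ (fderiv ℝ fun y => u y + 1 / 16 * ‖y - x₀‖ ^ 2) x b a := fun a b =>
    ((contDiff_add_mul_norm_sub_sq hu (1 / 16) x₀).contDiffAt.isSymmSndFDerivAt (by simp)) a b
  have hXY := sq_apply_le_mul_of_nonneg hsymm hpos (dirY θ) (dirX θ)
  have hXt := sq_apply_le_mul_of_nonneg hsymm hpos (EuclideanSpace.single 2 1) (dirX θ)
  have hX := hpos (dirX θ)
  have hY := hpos (dirY θ)
  have ht := hpos (EuclideanSpace.single 2 1)
  have htr := trace_rotated_frame θ
    (fderiv ℝ (fderiv ℝ fun y => u y + 1 / 16 * ‖y - x₀‖ ^ 2) x)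
  rw [Fin.sum_univ_three, ← htr]
  have hp2 : pd 2 (pd 2 u) x =
      fderiv ℝ (fderiv ℝ u) x (EuclideanSpace.single 2 1) (EuclideanSpace.single 2 1) :=
    fderiv_fderiv_apply_const hu x _ _
  have hp2X : pd 2 (fun x => fderiv ℝ u x (dirX θ)) x =
      fderiv ℝ (fderiv ℝ u) x (EuclideanSpace.single 2 1) (dirX θ) :=
    fderiv_fderiv_apply_const hu x _ _
  rw [Xd_eq_fderiv θ u, Yd_eq_fderiv θ u, hp2, hp2X, Xd_eq_fderiv, Yd_eq_fderiv, Yd_eq_fderiv] at heq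
  beta_reduce at heq
  rw [fderiv_fderiv_apply_const hu, fderiv_fderiv_apply_const hu,
    fderiv_fderiv_apply_const hu] at heq
  simp only [fderiv_fderiv_add_mul_norm_sub_sq hu, inner_dirX_self, inner_dirY_self,
    inner_dirY_dirX, inner_single_two_dirX, mul_zero, add_zero] at hXY hXt hX hY ht ⊢
  have h22 : inner ℝ (EuclideanSpace.single 2 1 : EuclideanSpace ℝ (Fin 3))
      (EuclideanSpace.single 2 1) = (1 : ℝ) := by simp
  rw [h22] at hXt ht ⊢
  generalize fderiv ℝ (fderiv ℝ u) x (dirX θ) (dirX θ) = A at *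
  generalize fderiv ℝ (fderiv ℝ u) x (dirY θ) (dirY θ) = B at *
  generalize fderiv ℝ (fderiv ℝ u) x (dirY θ) (dirX θ) = C at *
  generalize fderiv ℝ (fderiv ℝ u) x (EuclideanSpace.single 2 1) (dirX θ) = D at *
  generalize fderiv ℝ (fderiv ℝ u) x (EuclideanSpace.single 2 1)
    (EuclideanSpace.single 2 1) = G at *
  nlinarith [mul_nonneg hX (show 0 ≤ pd 2 u x + 1 / 8 by linarith)]

section Periodic

variable {f : EuclideanSpace ℝ (Fin 3) → ℝ}

/-- A continuous `ℤ³`-periodic function attains its minimum in the closed unit cube. -/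
lemma exists_forall_le_of_periodic (hf : Continuous f)
    (hper : ∀ (x a : EuclideanSpace ℝ (Fin 3)), (∀ i, ∃ k : ℤ, a i = (k : ℝ)) →
      f (x + a) = f x) :
    ∃ x₀ : EuclideanSpace ℝ (Fin 3), (∀ i, 0 ≤ x₀ i ∧ x₀ i ≤ 1) ∧ ∀ y, f x₀ ≤ f y := by
  have hK : IsCompact ((WithLp.toLp 2 : (Fin 3 → ℝ) → EuclideanSpace ℝ (Fin 3)) ''
      Set.Icc 0 1) := isCompact_Icc.image (PiLp.continuous_toLp 2 _)
  obtain ⟨_, ⟨z, hz, rfl⟩, hmin⟩ := hK.exists_isMinOn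
    ((Set.nonempty_Icc.2 zero_le_one).image _) hf.continuousOn
  refine ⟨_, fun i => ⟨hz.1 i, hz.2 i⟩, fun y => ?_⟩
  have h := hper y (WithLp.toLp 2 fun i => -(⌊y i⌋ : ℝ)) fun i => ⟨-⌊y i⌋, by simp⟩
  rw [← h]
  refine hmin ⟨fun i => Int.fract (y i), ⟨fun i => Int.fract_nonneg _,
    fun i => (Int.fract_lt_one _).le⟩, ?_⟩
  ext i
  simp [Int.fract, sub_eq_add_neg]

/-- A set of points of `[-1, 2)³` in a sublevel set of a periodic function is covered by `27`
translates of the part of that sublevel set in the unit cube. -/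
lemma volume_le_volume_sublevel_unitCube
    (hper : ∀ (x a : EuclideanSpace ℝ (Fin 3)), (∀ i, ∃ k : ℤ, a i = (k : ℝ)) →
      f (x + a) = f x) {P : Set (EuclideanSpace ℝ (Fin 3))} {m : ℝ}
    (hP : ∀ x ∈ P, f x ≤ m ∧ ∀ i, -1 ≤ x i ∧ x i < 2) :
    volume P ≤ 27 * volume {x : EuclideanSpace ℝ (Fin 3) |
      (∀ i, 0 ≤ x i ∧ x i < 1) ∧ f x ≤ m} := by
  set S := {x : EuclideanSpace ℝ (Fin 3) | (∀ i, 0 ≤ x i ∧ x i < 1) ∧ f x ≤ m} with hS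
  let τ : (Fin 3 → Fin 3) → EuclideanSpace ℝ (Fin 3) := fun k =>
    WithLp.toLp 2 fun i => 1 - ((k i : ℕ) : ℝ)
  have hcover : P ⊆ ⋃ k, (fun x => x + τ k) ⁻¹' S := by
    intro x hx
    obtain ⟨hfx, hbd⟩ := hP x hx
    have hk : ∀ i, ∃ k : Fin 3, 0 ≤ x i + (1 - ((k : ℕ) : ℝ)) ∧
        x i + (1 - ((k : ℕ) : ℝ)) < 1 := by
      intro i
      obtain ⟨h1, h2⟩ := hbd i
      rcases lt_or_ge (x i) 0 with h | h
      · exact ⟨0, by norm_num; linarith, by norm_num; linarith⟩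
      · rcases lt_or_ge (x i) 1 with h' | h'
        · exact ⟨1, by norm_num; linarith, by norm_num; linarith⟩
        · exact ⟨2, by norm_num; linarith, by norm_num; linarith⟩
    choose k hk using hk
    refine Set.mem_iUnion.2 ⟨k, fun i => hk i, ?_⟩
    rw [hper x (τ k) fun i => ⟨1 - ((k i : ℕ) : ℤ), by simp [τ]⟩]
    exact hfx
  calc volume P ≤ volume (⋃ k, (fun x => x + τ k) ⁻¹' S) := measure_mono hcover
    _ ≤ ∑ k, volume ((fun x => x + τ k) ⁻¹' S) := measure_iUnion_fintype_le _ _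
    _ = 27 * volume S := by simp [measure_preimage_add_right]

end Periodic

/-- The contact set has gradient image containing a fixed ball, hence measure bounded below. -/
lemma volume_ball_le_of_solution {θ M : ℝ} {u f : EuclideanSpace ℝ (Fin 3) → ℝ}
    (hu : ContDiff ℝ 2 u)
    (hper : ∀ (x a : EuclideanSpace ℝ (Fin 3)), (∀ i, ∃ k : ℤ, a i = (k : ℝ)) →
      u (x + a) = u x)
    (heq : ∀ x, (Xd θ (Xd θ u) x + 1) *
      (Yd θ (Yd θ u) x + pd 2 (pd 2 u) x + pd 2 u x + 1) -
      (Yd θ (Xd θ u) x) ^ 2 - (pd 2 (Xd θ u) x) ^ 2 = f x)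
    (hM : ∀ x, f x ≤ M) :
    volume (Metric.closedBall (0 : EuclideanSpace ℝ (Fin 3)) (1 / 64)) ≤
      ENNReal.ofReal (6 * (2 * M) ^ 3) * (27 * volume {x : EuclideanSpace ℝ (Fin 3) |
        (∀ i, 0 ≤ x i ∧ x i < 1) ∧ u x ≤ (⨅ y, u y) + 1}) := by
  obtain ⟨x₀, hx₀, hmin⟩ := exists_forall_le_of_periodic hu.continuous hper
  have hinf : u x₀ ≤ ⨅ y, u y := le_ciInf hmin
  set v : EuclideanSpace ℝ (Fin 3) → ℝ := fun y => u y + 1 / 16 * ‖y - x₀‖ ^ 2 with hvdef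
  have hv : ContDiff ℝ 2 v := contDiff_add_mul_norm_sub_sq hu (1 / 16) x₀
  have hv1 : ContDiff ℝ 1 (fderiv ℝ v) := hv.fderiv_right (by norm_num)
  have hsymm : ∀ x a b, fderiv ℝ (fderiv ℝ v) x a b = fderiv ℝ (fderiv ℝ v) x b a :=
    fun x a b => (hv.contDiffAt.isSymmSndFDerivAt (by simp)) a b
  set P : Set (EuclideanSpace ℝ (Fin 3)) := {x | ‖x - x₀‖ ≤ 1 / 4 ∧ u x ≤ u x₀ + 1 ∧
    -(1 / 8) ≤ pd 2 u x ∧ ∀ a, 0 ≤ fderiv ℝ (fderiv ℝ v) x a a} with hPdef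
  have hPclosed : IsClosed P := by
    have hpd : Continuous (pd 2 u) :=
      (hu.continuous_fderiv (by norm_num)).clm_apply continuous_const
    have hD2 : ∀ a, Continuous fun x => fderiv ℝ (fderiv ℝ v) x a a := fun a =>
      ((hv1.continuous_fderiv (by norm_num)).clm_apply continuous_const).clm_apply
        continuous_const
    have hnonneg : IsClosed {x | ∀ a, 0 ≤ fderiv ℝ (fderiv ℝ v) x a a} := by
      rw [show {x | ∀ a, 0 ≤ fderiv ℝ (fderiv ℝ v) x a a} =
        ⋂ a, {x | 0 ≤ fderiv ℝ (fderiv ℝ v) x a a} by ext; simp]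
      exact isClosed_iInter fun a => isClosed_le continuous_const (hD2 a)
    exact (isClosed_le (continuous_id.sub continuous_const).norm
      continuous_const).inter
      ((isClosed_le hu.continuous continuous_const).inter
        ((isClosed_le continuous_const hpd).inter hnonneg))
  have hsub : Metric.closedBall 0 (1 / 64) ⊆ gradMap v '' P := by
    intro p hp
    rw [mem_closedBall_zero_iff] at hp
    obtain ⟨x, hx1, hx2, hx3, hx4⟩ := exists_contact_point hu hmin
      (c := 1 / 16) (by norm_num) (p := p) (by linarith)
    refine ⟨x, ⟨hx1, by linarith, ?_, hx4⟩, ?_⟩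
    · have h := (hasFDerivAt_add_mul_norm_sub_sq (hu.differentiable (by norm_num))
        (1 / 16) x₀ x).fderiv.symm.trans hx3
      have h2 := congrArg (fun L => L (EuclideanSpace.single 2 1)) h
      simp [EuclideanSpace.inner_single_right] at h2
      have hp2 := (PiLp.norm_apply_le p 2).trans hp
      have hx2' := (PiLp.norm_apply_le (x - x₀) 2).trans hx1
      rw [Real.norm_eq_abs] at hp2 hx2'
      have hp3 := abs_le.1 hp2
      have hx3' := abs_le.1 hx2'
      simp only [PiLp.sub_apply] at hx3'
      change -(1 / 8) ≤ fderiv ℝ u x (EuclideanSpace.single 2 1)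
      linarith [hp3.1, hx3'.2]
    · ext i
      change fderiv ℝ v x (EuclideanSpace.single i 1) = p i
      rw [hx3]
      simp [EuclideanSpace.inner_single_right]
  have hT : ∀ x ∈ P, ∀ i j, |fderiv ℝ (fderiv ℝ v) x (EuclideanSpace.single j 1)
      (EuclideanSpace.single i 1)| ≤ 2 * M := by
    rintro x ⟨-, -, hg, hpos⟩ i j
    have := trace_fderiv_fderiv_le hu (heq x) hg hpos
    exact (abs_apply_single_le_trace (hsymm x) hpos j i).trans (by linarith [hM x])
  refine (volume_le_of_subset_gradMap_image hv hPclosed.measurableSet hsub hT).trans ?_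
  gcongr
  refine volume_le_volume_sublevel_unitCube hper fun x hx => ⟨by linarith [hx.2.1], fun i => ?_⟩
  have h := abs_le.1 ((PiLp.norm_apply_le (x - x₀) i).trans hx.1)
  simp only [PiLp.sub_apply] at h
  have := hx₀ i
  constructor <;> linarith [h.1, h.2]

/-- The measure lower bound (2.3) for solutions of the reduced Calabi–Yau equation on `T³`:
for every `θ` and smooth `ℤ³`-periodic `F` there is `δ > 0` such that for every smooth
`ℤ³`-periodic solution `u` with `sup u = 0`, the set `{x ∈ [0,1)³ : u(x) ≤ inf u + 1}` has
Lebesgue measure at least `δ`. -/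
theorem sublevel_measure_lower_bound_kodaira_thurston (θ : ℝ)
    (F : EuclideanSpace ℝ (Fin 3) → ℝ) (hF : ContDiff ℝ (⊤ : ℕ∞) F)
    (hFper : ∀ (x a : EuclideanSpace ℝ (Fin 3)), (∀ i, ∃ k : ℤ, a i = (k : ℝ)) →
      F (x + a) = F x) :
    ∃ δ : ℝ, 0 < δ ∧
      ∀ u : EuclideanSpace ℝ (Fin 3) → ℝ,
        ContDiff ℝ (⊤ : ℕ∞) u →
        (∀ (x a : EuclideanSpace ℝ (Fin 3)), (∀ i, ∃ k : ℤ, a i = (k : ℝ)) →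
          u (x + a) = u x) →
        (⨆ x, u x) = 0 →
        (∀ x, (Xd θ (Xd θ u) x + 1) *
              (Yd θ (Yd θ u) x + pd 2 (pd 2 u) x + pd 2 u x + 1) -
            (Yd θ (Xd θ u) x) ^ 2 - (pd 2 (Xd θ u) x) ^ 2 = Real.exp (F x)) →
        (∀ x, 0 < Xd θ (Xd θ u) x + 1) →
        (∀ x, 0 < Yd θ (Yd θ u) x + pd 2 (pd 2 u) x + pd 2 u x + 1) →
        ENNReal.ofReal δ ≤
          volume {x : EuclideanSpace ℝ (Fin 3) |
            (∀ i, 0 ≤ x i ∧ x i < 1) ∧ u x ≤ (⨅ y, u y) + 1} := by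
  obtain ⟨z, -, hz⟩ := exists_forall_le_of_periodic hF.continuous.neg
    (fun x a ha => by simp only [Pi.neg_apply, hFper x a ha])
  set M := Real.exp (F z) with hM
  have hMpos : 0 < M := Real.exp_pos _
  have hFM : ∀ x, Real.exp (F x) ≤ M := fun x => Real.exp_le_exp.2 (neg_le_neg_iff.1 (hz x))
  set V := volume (Metric.closedBall (0 : EuclideanSpace ℝ (Fin 3)) (1 / 64)) with hV
  have hVpos : 0 < V := Metric.measure_closedBall_pos _ _ (by norm_num)
  have hVtop : V ≠ ⊤ := measure_closedBall_lt_top.ne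
  set K : ℝ := 6 * (2 * M) ^ 3 * 27 with hK
  have hKpos : 0 < K := by positivity
  refine ⟨V.toReal / K, div_pos (ENNReal.toReal_pos hVpos.ne' hVtop) hKpos, ?_⟩
  intro u hu huper _ heq _ _
  have h := volume_ball_le_of_solution (by exact_mod_cast contDiff_infty.1 hu 2) huper heq hFM
  rw [ENNReal.ofReal_div_of_pos hKpos, ENNReal.ofReal_toReal hVtop]
  refine ENNReal.div_le_of_le_mul' (h.trans_eq ?_)
  rw [hK, ENNReal.ofReal_mul (show 0 ≤ 6 * (2 * M) ^ 3 by positivity), mul_assoc,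
    ENNReal.ofReal_ofNat]
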